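/- For every interval [α,β] ⊆ (0,1] with α < β, λ(F^{-(n-1)}([α,β])) = (log(β/α)/log n)·(1 + O_{α,β}(1/log n)) as n → ∞, where F is the Farey map and λ is Lebesgue measure. In particular, λ(F^{-(n-1)}([α,β]))·log n → log(β/α). -/

import Mathlib

open Real MeasureTheory Filter

noncomputable def farey (x : ℝ) : ℝ := if x ≤ 1/2 then x / (1 - x) else (1 - x) / x

noncomputable def preimageMeasure (α β : ℝ) (n : ℕ) : ℝ :=
  (volume (farey^[n - 1] ⁻¹' (Set.Icc α β) ∩ Set.Icc (0:ℝ) 1)).toReal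

/-! Let `G_n` be the density of the law of `F^n` with respect to the infinite invariant measure
`dx / x`. The transfer operator keeps `G_n` nonnegative, nondecreasing and concave on `[0, 1]`, so
the mass of `[α, β]` lies between `G_n(α) log (β / α)` and `G_n(β) log (β / α)`, and it remains to
show `G_n(x) = 1 / log n + O(1 / log² n)`. The values `a_n = G_n(1)` decrease because
`G_{n+1}(1) = G_n(1/2)`.

In the coordinate `1 / x` the left branch of `F` is `t ↦ t - 1`, so the mass `T_n(t)` of `(0, 1/t)`
satisfies `T_{n+1}(t) = T_n(t + 1) + m` with `a_{n+1} log (1 + 1/t) ≤ m ≤ a_n log (1 + 1/t)`.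
Since `T_n(1) = 1`, telescoping from below gives `a_n log (n + 1) ≤ 1`, hence
`a_0 + ⋯ + a_{n-1} = O(n / log n)`. Telescoping from above over `n` steps starting at time `n` gives
`1 ≤ T_n(n + 1) + a_n log (n + 1)`, and the bound on the sum makes `T_n(n + 1) = O(1 / log n)`.
The transfer equation at the points `1 / (j + 1)` carries the lower bound from `1` to every `x > 0`.
-/

section

open Set Topology

/-! ### An invariant cone for the transfer operator -/

lemma concaveOn_comp_const_sub {s : Set ℝ} {f : ℝ → ℝ} (hf : ConcaveOn ℝ s f) (c : ℝ) :
    ConcaveOn ℝ ((fun x ↦ c - x) ⁻¹' s) (fun x ↦ f (c - x)) :=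
  hf.comp_affineMap (AffineEquiv.constVSub ℝ c).toAffineMap

lemma convexOn_one_div_one_add : ConvexOn ℝ (Ioi (-1)) (fun x : ℝ ↦ 1 / (1 + x)) := by
  simpa [Function.comp_def] using (convexOn_zpow (𝕜 := ℝ) (-1)).translate_right 1

lemma one_div_one_add_mem_Icc {x : ℝ} (hx : x ∈ Icc (0 : ℝ) 1) :
    1 / (1 + x) ∈ Icc (1 / 2 : ℝ) 1 := by
  have hx₀ : 0 < 1 + x := by linarith [hx.1]
  rw [mem_Icc, div_le_div_iff₀ two_pos hx₀, div_le_one hx₀]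
  constructor <;> linarith [hx.1, hx.2]

lemma one_sub_one_div_one_add {x : ℝ} (hx : 0 ≤ x) : 1 - 1 / (1 + x) = x / (1 + x) := by
  field_simp
  ring

lemma div_one_add_mem_Icc {x : ℝ} (hx : x ∈ Icc (0 : ℝ) 1) : x / (1 + x) ∈ Icc (0 : ℝ) (1 / 2) := by
  have h := one_div_one_add_mem_Icc hx
  rw [← one_sub_one_div_one_add hx.1]
  constructor <;> linarith [h.1, h.2]

/-- The transfer operator of the Farey map, acting on densities with respect to the infinite
invariant measure `dx / x` (see `map_farey_withDensity`). -/
noncomputable def fareyTransfer (g : ℝ → ℝ) (x : ℝ) : ℝ :=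
  1 / (1 + x) * g (x / (1 + x)) + x / (1 + x) * g (1 / (1 + x))

/-- The value at `p` of `fareyTransfer g` in the coordinate `p = 1 / (1 + x)`, in which the two
inverse branches of the Farey map are exchanged by the reflection `p ↦ 1 - p`. -/
noncomputable def reflectedAverage (g : ℝ → ℝ) (p : ℝ) : ℝ := p * g (1 - p) + (1 - p) * g p

/-- The cone of functions that are nonnegative, nondecreasing and concave on `[0, 1]`. It is
preserved by `fareyTransfer`, which keeps the densities of all iterates under control. -/
structure InFareyCone (g : ℝ → ℝ) : Prop where
  concaveOn : ConcaveOn ℝ (Icc 0 1) g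
  monotoneOn : MonotoneOn g (Icc 0 1)
  nonneg : ∀ x ∈ Icc (0 : ℝ) 1, 0 ≤ g x

lemma inFareyCone_id : InFareyCone id :=
  ⟨concaveOn_id (convex_Icc 0 1), monotoneOn_id, fun _ hx ↦ hx.1⟩

lemma measurable_fareyTransfer {g : ℝ → ℝ} (hg : Measurable g) : Measurable (fareyTransfer g) := by
  unfold fareyTransfer
  have hleft : Measurable fun x : ℝ ↦ g (x / (1 + x)) := hg.comp (by fun_prop)
  have hright : Measurable fun x : ℝ ↦ g (1 / (1 + x)) := hg.comp (by fun_prop)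
  fun_prop

lemma fareyTransfer_eq_reflectedAverage (g : ℝ → ℝ) {x : ℝ} (hx : 0 ≤ x) :
    fareyTransfer g x = reflectedAverage g (1 / (1 + x)) := by
  rw [fareyTransfer, reflectedAverage, one_sub_one_div_one_add hx]

lemma fareyTransfer_one (g : ℝ → ℝ) : fareyTransfer g 1 = g (1 / 2) := by
  rw [fareyTransfer, one_add_one_eq_two]
  ring

lemma reflectedAverage_one_sub (g : ℝ → ℝ) (p : ℝ) :
    reflectedAverage g (1 - p) = reflectedAverage g p := by
  simp only [reflectedAverage, sub_sub_cancel]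
  ring

namespace InFareyCone

variable {g : ℝ → ℝ}

lemma concaveOn_reflectedAverage (hg : InFareyCone g) :
    ConcaveOn ℝ (Icc 0 1) (reflectedAverage g) := by
  have hpre : (fun p : ℝ ↦ 1 - p) ⁻¹' Icc 0 1 = Icc 0 1 := by simp
  have hmaps : MapsTo (fun p : ℝ ↦ 1 - p) (Icc 0 1) (Icc 0 1) := hpre.ge
  have hrefl : ConcaveOn ℝ (Icc 0 1) (fun p ↦ g (1 - p)) := by
    simpa only [hpre] using concaveOn_comp_const_sub hg.concaveOn 1
  have hanti : AntitoneOn (fun p ↦ g (1 - p)) (Icc 0 1) := fun p hp q hq hpq ↦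
    hg.monotoneOn (hmaps hq) (hmaps hp) (sub_le_sub_left hpq 1)
  have hprod : ConcaveOn ℝ (Icc 0 1) (fun p ↦ p * g (1 - p)) :=
    (concaveOn_id (convex_Icc 0 1)).mul hrefl (fun _ hp ↦ hp.1)
      (fun _ hp ↦ hg.nonneg _ (hmaps hp)) (monotoneOn_id.antivaryOn hanti)
  have hprod_refl : ConcaveOn ℝ (Icc 0 1) (fun p ↦ (1 - p) * g p) := by
    simpa only [hpre, sub_sub_cancel] using concaveOn_comp_const_sub hprod 1
  exact hprod.add hprod_refl

-- A concave function symmetric about `1 / 2` decreases to the right of `1 / 2`.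
lemma antitoneOn_reflectedAverage (hg : InFareyCone g) :
    AntitoneOn (reflectedAverage g) (Icc (1 / 2) 1) := by
  intro p hp q hq hpq
  have hmin := hg.concaveOn_reflectedAverage.min_le_of_mem_Icc (x := 1 - q) (y := q) (z := p)
    ⟨by linarith [hq.2], by linarith [hq.1]⟩ ⟨by linarith [hq.1], hq.2⟩
    ⟨by linarith [hp.1, hq.1], hpq⟩
  rwa [reflectedAverage_one_sub, min_self] at hmin

lemma concaveOn_fareyTransfer (hg : InFareyCone g) : ConcaveOn ℝ (Icc 0 1) (fareyTransfer g) := by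
  have himage : (fun x : ℝ ↦ 1 / (1 + x)) '' Icc 0 1 = Icc (1 / 2) 1 := by
    refine (MapsTo.image_subset fun x hx ↦ one_div_one_add_mem_Icc hx).antisymm fun p hp ↦ ?_
    have hp₀ : 0 < p := by linarith [hp.1]
    refine ⟨1 / p - 1, ⟨?_, ?_⟩, by simp⟩
    · linarith [(one_le_div hp₀).2 hp.2]
    · have : 1 / p ≤ 2 := by rw [div_le_iff₀ hp₀]; linarith [hp.1]
      linarith
  have hsub : Icc (1 / 2 : ℝ) 1 ⊆ Icc 0 1 := Icc_subset_Icc_left (by norm_num)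
  refine ConcaveOn.congr (f := reflectedAverage g ∘ fun x ↦ 1 / (1 + x)) ?_
    fun x hx ↦ (fareyTransfer_eq_reflectedAverage g hx.1).symm
  have hconvex : ConvexOn ℝ (Icc 0 1) (fun x : ℝ ↦ 1 / (1 + x)) :=
    convexOn_one_div_one_add.subset (fun x hx ↦ neg_one_lt_zero.trans_le hx.1) (convex_Icc 0 1)
  refine ConcaveOn.comp_convexOn ?_ hconvex ?_ <;> rw [himage]
  · exact hg.concaveOn_reflectedAverage.subset hsub (convex_Icc _ _)
  · exact hg.antitoneOn_reflectedAverage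

lemma monotoneOn_fareyTransfer (hg : InFareyCone g) : MonotoneOn (fareyTransfer g) (Icc 0 1) := by
  intro x hx y hy hxy
  rw [fareyTransfer_eq_reflectedAverage g hx.1, fareyTransfer_eq_reflectedAverage g hy.1]
  refine hg.antitoneOn_reflectedAverage (one_div_one_add_mem_Icc hy) (one_div_one_add_mem_Icc hx) ?_
  exact one_div_le_one_div_of_le (by linarith [hx.1]) (by linarith)

lemma map_fareyTransfer (hg : InFareyCone g) : InFareyCone (fareyTransfer g) where
  concaveOn := hg.concaveOn_fareyTransfer
  monotoneOn := hg.monotoneOn_fareyTransfer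
  nonneg x hx := by
    have hleft := hg.nonneg _ (Icc_subset_Icc_right (by norm_num) (div_one_add_mem_Icc hx))
    have hright := hg.nonneg _ (Icc_subset_Icc_left (by norm_num) (one_div_one_add_mem_Icc hx))
    have hx₀ := hx.1
    unfold fareyTransfer
    positivity

end InFareyCone

/-! ### Transport of densities by the Farey map -/

lemma measurable_farey : Measurable farey :=
  Measurable.ite measurableSet_Iic (by fun_prop) (by fun_prop)

lemma farey_div_one_add {x : ℝ} (hx : x ∈ Icc (0 : ℝ) 1) : farey (x / (1 + x)) = x := by
  have hx₀ : 0 < 1 + x := by linarith [hx.1]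
  rw [farey, if_pos (div_one_add_mem_Icc hx).2]
  field_simp
  ring

lemma farey_one_sub {x : ℝ} (hx : x < 1 / 2) : farey (1 - x) = farey x := by
  rw [farey, farey, if_neg (by linarith), if_pos hx.le, sub_sub_cancel]

lemma farey_one_div_one_add {x : ℝ} (hx : x ∈ Ico (0 : ℝ) 1) : farey (1 / (1 + x)) = x := by
  have hlt : x / (1 + x) < 1 / 2 := by
    rw [div_lt_div_iff₀ (by linarith [hx.1]) two_pos]
    linarith [hx.2]
  calc farey (1 / (1 + x)) = farey (1 - x / (1 + x)) := by
        rw [← one_sub_one_div_one_add hx.1, sub_sub_cancel]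
    _ = x := by rw [farey_one_sub hlt, farey_div_one_add (Ico_subset_Icc_self hx)]

lemma preimage_farey_Ioo {c : ℝ} (hc₀ : 0 ≤ c) (hc₁ : c ≤ 1) :
    farey ⁻¹' Ioo 0 c = Ioo 0 (c / (1 + c)) ∪ Ioo (1 / (1 + c)) 1 := by
  have hc : 0 < 1 + c := by linarith
  have hleft : c / (1 + c) ≤ 1 / 2 := (div_one_add_mem_Icc ⟨hc₀, hc₁⟩).2
  have hright : 1 / 2 ≤ 1 / (1 + c) := (one_div_one_add_mem_Icc ⟨hc₀, hc₁⟩).1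
  ext x
  simp only [mem_preimage, farey, mem_union, mem_Ioo]
  split_ifs with hx
  · have hx₁ : 0 < 1 - x := by linarith
    have hbound : x / (1 - x) < c ↔ x < c / (1 + c) := by
      rw [div_lt_iff₀ hx₁, lt_div_iff₀ hc]
      constructor <;> intro <;> linarith
    rw [div_pos_iff_of_pos_right hx₁, hbound, or_iff_left fun h ↦ by linarith [h.1]]
  · have hx₀ : 0 < x := by linarith
    have hbound : (1 - x) / x < c ↔ 1 / (1 + c) < x := by
      rw [div_lt_iff₀ hx₀, div_lt_iff₀ hc]
      constructor <;> intro <;> linarith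
    rw [div_pos_iff_of_pos_right hx₀, sub_pos, hbound, or_iff_right fun h ↦ by linarith [h.2],
      and_comm]

lemma image_div_one_add_Ioo : (fun x : ℝ ↦ x / (1 + x)) '' Ioo 0 1 = Ioo 0 (1 / 2) := by
  refine Subset.antisymm ?_ fun y ⟨hy₀, hy₁⟩ ↦ ?_
  · rintro _ ⟨x, ⟨hx₀, hx₁⟩, rfl⟩
    exact ⟨by positivity, by rw [div_lt_div_iff₀ (by linarith) two_pos]; linarith⟩
  · have hy : 0 < 1 - y := by linarith
    refine ⟨y / (1 - y), ⟨by positivity, by rw [div_lt_one hy]; linarith⟩, ?_⟩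
    field_simp
    ring

lemma lintegral_Ioo_zero_half (f : ℝ → ENNReal) :
    ∫⁻ x in Ioo 0 (1 / 2), f x =
      ∫⁻ x in Ioo 0 1, ENNReal.ofReal (1 / (1 + x) ^ 2) * f (x / (1 + x)) := by
  have hpos : ∀ x ∈ Ioo (0 : ℝ) 1, 0 < 1 + x := fun x hx ↦ by linarith [hx.1]
  rw [← image_div_one_add_Ioo]
  refine lintegral_image_eq_lintegral_deriv_mul_of_monotoneOn measurableSet_Ioo
    (fun x hx ↦ ?_) (fun x hx y hy hxy ↦ ?_) f
  · have h := (hasDerivAt_id x).div ((hasDerivAt_id x).const_add 1) (hpos x hx).ne'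
    exact (h.congr_deriv (by simp)).hasDerivWithinAt
  · exact (div_le_div_iff₀ (hpos x hx) (hpos y hy)).2 (by linarith)

lemma setLIntegral_comp_const_sub (f : ℝ → ENNReal) (a b c : ℝ) :
    ∫⁻ x in Ioo (c - b) (c - a), f (c - x) = ∫⁻ x in Ioo a b, f x := by
  rw [← preimage_const_sub_Ioo]
  exact (Measure.measurePreserving_sub_left volume c).setLIntegral_comp_preimage_emb
    (MeasurableEquiv.subLeft c).measurableEmbedding f _

lemma lintegral_Ioo_zero_one {f : ℝ → ENNReal} (hf : Measurable f) :
    ∫⁻ x in Ioo 0 1, f x = ∫⁻ x in Ioo 0 1,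
      ENNReal.ofReal (1 / (1 + x) ^ 2) * (f (x / (1 + x)) + f (1 / (1 + x))) := by
  have hhalf : Ioo (0 : ℝ) 1 =ᵐ[volume] (Ioo 0 (1 / 2) ∪ Ioo (1 / 2) 1 : Set ℝ) := by
    have hunion : (Ioc 0 (1 / 2) ∪ Ioo (1 / 2) 1 : Set ℝ) = Ioo 0 1 :=
      Ioc_union_Ioo_eq_Ioo (by norm_num) (by norm_num)
    rw [← hunion]
    exact Ioo_ae_eq_Ioc.symm.union (ae_eq_refl _)
  have hdisj : Disjoint (Ioo (0 : ℝ) (1 / 2)) (Ioo (1 / 2) 1) :=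
    Set.disjoint_left.2 fun x hx hx' ↦ lt_asymm hx.2 hx'.1
  have hrefl : ∫⁻ x in Ioo (1 / 2) 1, f x = ∫⁻ x in Ioo 0 (1 / 2), f (1 - x) := by
    rw [← setLIntegral_comp_const_sub f _ _ 1]
    norm_num
  rw [setLIntegral_congr hhalf, lintegral_union measurableSet_Ioo hdisj, hrefl,
    ← lintegral_add_left hf, lintegral_Ioo_zero_half fun x ↦ f x + f (1 - x)]
  refine setLIntegral_congr_fun measurableSet_Ioo fun x hx ↦ ?_
  rw [← one_sub_one_div_one_add hx.1.le, sub_sub_cancel]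

/-- The infinite invariant measure `dx / x` of the Farey map. -/
noncomputable def fareyMeasure : Measure ℝ :=
  (volume.restrict (Icc 0 1)).withDensity fun x ↦ ENNReal.ofReal x⁻¹

lemma ae_mem_Ioo_fareyMeasure : ∀ᵐ x ∂fareyMeasure, x ∈ Ioo (0 : ℝ) 1 := by
  refine (withDensity_absolutelyContinuous _ _).ae_le ?_
  rw [← restrict_Ioo_eq_restrict_Icc]
  exact ae_restrict_mem measurableSet_Ioo

lemma lintegral_fareyMeasure {f : ℝ → ENNReal} (hf : Measurable f) :
    ∫⁻ x, f x ∂fareyMeasure = ∫⁻ x in Ioo 0 1, ENNReal.ofReal x⁻¹ * f x := by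
  rw [fareyMeasure, lintegral_withDensity_eq_lintegral_mul _ (by fun_prop) hf,
    ← restrict_Ioo_eq_restrict_Icc]
  rfl

lemma lintegral_fareyMeasure_eq_branches {f : ℝ → ENNReal} (hf : Measurable f) :
    ∫⁻ x, f x ∂fareyMeasure =
      ∫⁻ x, ENNReal.ofReal (1 / (1 + x)) * f (x / (1 + x)) +
        ENNReal.ofReal (x / (1 + x)) * f (1 / (1 + x)) ∂fareyMeasure := by
  have hleft : Measurable fun x : ℝ ↦ f (x / (1 + x)) := hf.comp (by fun_prop)
  have hright : Measurable fun x : ℝ ↦ f (1 / (1 + x)) := hf.comp (by fun_prop)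
  rw [lintegral_fareyMeasure hf, lintegral_fareyMeasure (by fun_prop),
    lintegral_Ioo_zero_one (by fun_prop)]
  refine setLIntegral_congr_fun measurableSet_Ioo fun x ⟨hx₀, _⟩ ↦ ?_
  have hx₁ : 0 < 1 + x := by linarith
  simp only [mul_add, ← mul_assoc]
  rw [← ENNReal.ofReal_mul (by positivity), ← ENNReal.ofReal_mul (by positivity),
    ← ENNReal.ofReal_mul (by positivity), ← ENNReal.ofReal_mul (by positivity)]
  congr 3 <;> field_simp

lemma map_farey_withDensity {g : ℝ → ℝ} (hg : Measurable g) (hg₀ : ∀ x ∈ Icc (0 : ℝ) 1, 0 ≤ g x) :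
    (fareyMeasure.withDensity fun x ↦ ENNReal.ofReal (g x)).map farey =
      fareyMeasure.withDensity fun x ↦ ENNReal.ofReal (fareyTransfer g x) := by
  have hTg := measurable_fareyTransfer hg
  refine Measure.ext_of_lintegral _ fun φ hφ ↦ ?_
  have hφF : Measurable fun x ↦ φ (farey x) := hφ.comp measurable_farey
  rw [lintegral_map hφ measurable_farey,
    lintegral_withDensity_eq_lintegral_mul _ (by fun_prop) hφF,
    lintegral_withDensity_eq_lintegral_mul _ (by fun_prop) hφ,
    lintegral_fareyMeasure_eq_branches (hg.ennreal_ofReal.mul hφF)]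
  refine lintegral_congr_ae <| ae_mem_Ioo_fareyMeasure.mono fun x hx ↦ ?_
  have hIcc := Ioo_subset_Icc_self hx
  have hx₀ := hx.1
  have hleft := hg₀ _ (Icc_subset_Icc_right (by norm_num) (div_one_add_mem_Icc hIcc))
  have hright := hg₀ _ (Icc_subset_Icc_left (by norm_num) (one_div_one_add_mem_Icc hIcc))
  simp only [Pi.mul_apply, fareyTransfer, farey_div_one_add hIcc,
    farey_one_div_one_add (Ioo_subset_Ico_self hx)]
  rw [ENNReal.ofReal_add (by positivity) (by positivity), ENNReal.ofReal_mul (by positivity),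
    ENNReal.ofReal_mul (by positivity)]
  ring

/-- The density of `fareyLaw n` with respect to `fareyMeasure`. Lebesgue measure is `x · dx / x`,
so the iteration starts from the identity. -/
noncomputable def fareyDensity (n : ℕ) : ℝ → ℝ := fareyTransfer^[n] id

/-- The law of `F^n` under Lebesgue measure on `[0, 1]`, where `F` is the Farey map. -/
noncomputable def fareyLaw (n : ℕ) : Measure ℝ := (volume.restrict (Icc 0 1)).map farey^[n]

lemma fareyDensity_succ (n : ℕ) : fareyDensity (n + 1) = fareyTransfer (fareyDensity n) :=
  Function.iterate_succ_apply' _ _ _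

lemma inFareyCone_fareyDensity (n : ℕ) : InFareyCone (fareyDensity n) := by
  induction n with
  | zero => exact inFareyCone_id
  | succ n ih => exact fareyDensity_succ n ▸ ih.map_fareyTransfer

lemma measurable_fareyDensity (n : ℕ) : Measurable (fareyDensity n) := by
  induction n with
  | zero => exact measurable_id
  | succ n ih => exact fareyDensity_succ n ▸ measurable_fareyTransfer ih

lemma fareyDensity_succ_one (n : ℕ) : fareyDensity (n + 1) 1 = fareyDensity n (1 / 2) := by
  rw [fareyDensity_succ, fareyTransfer_one]

lemma fareyDensity_one_nonneg (n : ℕ) : 0 ≤ fareyDensity n 1 :=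
  (inFareyCone_fareyDensity n).nonneg 1 (right_mem_Icc.2 zero_le_one)

lemma fareyDensity_le_one_right (n : ℕ) {x : ℝ} (hx : x ∈ Icc (0 : ℝ) 1) :
    fareyDensity n x ≤ fareyDensity n 1 :=
  (inFareyCone_fareyDensity n).monotoneOn hx (right_mem_Icc.2 zero_le_one) hx.2

lemma antitone_fareyDensity_one : Antitone fun n ↦ fareyDensity n 1 :=
  antitone_nat_of_succ_le fun n ↦ by
    rw [fareyDensity_succ_one]
    exact fareyDensity_le_one_right n (by norm_num)

lemma fareyLaw_apply (n : ℕ) {s : Set ℝ} (hs : MeasurableSet s) :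
    fareyLaw n s = volume (farey^[n] ⁻¹' s ∩ Icc 0 1) := by
  rw [fareyLaw, Measure.map_apply (measurable_farey.iterate n) hs,
    Measure.restrict_apply (measurable_farey.iterate n hs)]

instance isProbabilityMeasure_fareyLaw (n : ℕ) : IsProbabilityMeasure (fareyLaw n) :=
  ⟨by simp [fareyLaw_apply n MeasurableSet.univ]⟩

lemma fareyLaw_succ (n : ℕ) : fareyLaw (n + 1) = (fareyLaw n).map farey := by
  rw [fareyLaw, fareyLaw, Measure.map_map measurable_farey (measurable_farey.iterate n),
    Function.iterate_succ']

lemma fareyLaw_eq_withDensity (n : ℕ) :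
    fareyLaw n = fareyMeasure.withDensity fun x ↦ ENNReal.ofReal (fareyDensity n x) := by
  induction n with
  | zero =>
    refine Measure.ext_of_lintegral _ fun φ hφ ↦ ?_
    have hmeas : Measurable fun x ↦ ENNReal.ofReal (fareyDensity 0 x) :=
      (measurable_fareyDensity 0).ennreal_ofReal
    rw [lintegral_withDensity_eq_lintegral_mul _ hmeas hφ,
      lintegral_fareyMeasure (hmeas.mul hφ), fareyLaw, Function.iterate_zero, Measure.map_id,
      ← restrict_Ioo_eq_restrict_Icc]
    refine setLIntegral_congr_fun measurableSet_Ioo fun x hx ↦ ?_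
    have hx₀ := hx.1
    change φ x = ENNReal.ofReal x⁻¹ * (ENNReal.ofReal x * φ x)
    rw [← mul_assoc, ← ENNReal.ofReal_mul (by positivity), inv_mul_cancel₀ hx₀.ne',
      ENNReal.ofReal_one, one_mul]
  | succ n ih =>
    rw [fareyLaw_succ, ih, fareyDensity_succ,
      map_farey_withDensity (measurable_fareyDensity n) (inFareyCone_fareyDensity n).nonneg]

lemma fareyMeasure_Icc {u v : ℝ} (hu : 0 < u) (huv : u ≤ v) (hv : v ≤ 1) :
    fareyMeasure (Icc u v) = ENNReal.ofReal (log (v / u)) := by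
  have hsub : Icc u v ⊆ Icc 0 1 := Icc_subset_Icc hu.le hv
  have hint : IntegrableOn (fun x : ℝ ↦ x⁻¹) (Icc u v) :=
    (continuousOn_inv₀.mono fun x hx ↦ (hu.trans_le hx.1).ne').integrableOn_Icc
  rw [fareyMeasure, withDensity_apply _ measurableSet_Icc,
    Measure.restrict_restrict_of_subset hsub, ← ofReal_integral_eq_lintegral_ofReal hint,
    integral_Icc_eq_integral_Ioc, ← intervalIntegral.integral_of_le huv,
    integral_inv_of_pos hu (hu.trans_le huv)]
  filter_upwards [ae_restrict_mem measurableSet_Icc] with x hx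
  exact inv_nonneg.2 (hu.le.trans hx.1)

lemma mul_log_le_fareyLaw_Icc (n : ℕ) {u v : ℝ} (hu : 0 < u) (huv : u ≤ v) (hv : v ≤ 1) :
    fareyDensity n u * log (v / u) ≤ (fareyLaw n).real (Icc u v) := by
  have hG := inFareyCone_fareyDensity n
  have hu_mem : u ∈ Icc (0 : ℝ) 1 := ⟨hu.le, huv.trans hv⟩
  rw [Measure.real, ← ENNReal.ofReal_le_iff_le_toReal (measure_ne_top _ _),
    ENNReal.ofReal_mul (hG.nonneg u hu_mem), ← fareyMeasure_Icc hu huv hv, fareyLaw_eq_withDensity,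
    withDensity_apply _ measurableSet_Icc, ← setLIntegral_const]
  exact setLIntegral_mono (measurable_fareyDensity n).ennreal_ofReal fun x hx ↦
    ENNReal.ofReal_le_ofReal (hG.monotoneOn hu_mem ⟨hu.le.trans hx.1, hx.2.trans hv⟩ hx.1)

lemma fareyLaw_Icc_le_mul_log (n : ℕ) {u v : ℝ} (hu : 0 < u) (huv : u ≤ v) (hv : v ≤ 1) :
    (fareyLaw n).real (Icc u v) ≤ fareyDensity n v * log (v / u) := by
  have hG := inFareyCone_fareyDensity n
  have hv_mem : v ∈ Icc (0 : ℝ) 1 := ⟨hu.le.trans huv, hv⟩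
  have hlog : 0 ≤ log (v / u) := log_nonneg ((one_le_div hu).2 huv)
  refine ENNReal.toReal_le_of_le_ofReal (mul_nonneg (hG.nonneg v hv_mem) hlog) ?_
  rw [ENNReal.ofReal_mul (hG.nonneg v hv_mem), ← fareyMeasure_Icc hu huv hv,
    fareyLaw_eq_withDensity, withDensity_apply _ measurableSet_Icc, ← setLIntegral_const]
  exact setLIntegral_mono measurable_const fun x hx ↦
    ENNReal.ofReal_le_ofReal (hG.monotoneOn ⟨hu.le.trans hx.1, hx.2.trans hv⟩ hv_mem hx.2)

lemma fareyLaw_absolutelyContinuous (n : ℕ) : fareyLaw n ≪ fareyMeasure :=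
  fareyLaw_eq_withDensity n ▸ withDensity_absolutelyContinuous _ _

lemma fareyMeasure_absolutelyContinuous : fareyMeasure ≪ volume :=
  (withDensity_absolutelyContinuous _ _).trans Measure.absolutelyContinuous_restrict

lemma fareyLaw_Ioo_zero_one (n : ℕ) : (fareyLaw n).real (Ioo 0 1) = 1 := by
  have hae := (fareyLaw_absolutelyContinuous n).ae_le ae_mem_Ioo_fareyMeasure
  rw [Measure.real, (mem_ae_iff_prob_eq_one measurableSet_Ioo).1 hae, ENNReal.toReal_one]

lemma fareyLaw_Ioo (n : ℕ) (u v : ℝ) : (fareyLaw n).real (Ioo u v) = (fareyLaw n).real (Icc u v) :=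
  measureReal_congr <|
    ((fareyLaw_absolutelyContinuous n).trans fareyMeasure_absolutelyContinuous).ae_eq Ioo_ae_eq_Icc

/-! ### Renewal inequalities near the neutral fixed point -/

/-- The probability that `1 / F^n` exceeds `t`, where `F` is the Farey map and the initial point is
uniform on `[0, 1]`. In this coordinate the left branch of `F` is the translation `t ↦ t - 1`. -/
noncomputable def reciprocalTail (n : ℕ) (t : ℝ) : ℝ := (fareyLaw n).real (Ioo 0 (1 / t))

lemma reciprocalTail_nonneg (n : ℕ) (t : ℝ) : 0 ≤ reciprocalTail n t := measureReal_nonneg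

lemma reciprocalTail_one (n : ℕ) : reciprocalTail n 1 = 1 := by
  rw [reciprocalTail, div_one, fareyLaw_Ioo_zero_one]

lemma reciprocalTail_zero {t : ℝ} (ht : 1 ≤ t) : reciprocalTail 0 t = 1 / t := by
  have ht₀ : 0 < t := by linarith
  have hsub : Ioo 0 (1 / t) ⊆ Icc 0 1 :=
    Ioo_subset_Icc_self.trans (Icc_subset_Icc_right ((div_le_one ht₀).2 ht))
  rw [reciprocalTail, Measure.real, fareyLaw_apply 0 measurableSet_Ioo, Function.iterate_zero,
    preimage_id, inter_eq_left.2 hsub, Real.volume_Ioo, sub_zero,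
    ENNReal.toReal_ofReal (by positivity)]

lemma reciprocalTail_succ (n : ℕ) {t : ℝ} (ht : 1 ≤ t) :
    reciprocalTail (n + 1) t =
      reciprocalTail n (t + 1) + (fareyLaw n).real (Ioo (t / (t + 1)) 1) := by
  have ht₀ : 0 < t := by linarith
  have hle : 1 / t ≤ 1 := (div_le_one ht₀).2 ht
  have hleft : 1 / t / (1 + 1 / t) = 1 / (t + 1) := by field_simp
  have hright : 1 / (1 + 1 / t) = t / (t + 1) := by field_simp
  have hdisj : Disjoint (Ioo 0 (1 / (t + 1))) (Ioo (t / (t + 1)) 1) :=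
    Set.disjoint_left.2 fun x hx hx' ↦
      absurd (hx'.1.trans hx.2) (not_lt.2 (div_le_div_of_nonneg_right ht (by positivity)))
  rw [reciprocalTail, fareyLaw_succ, map_measureReal_apply measurable_farey measurableSet_Ioo,
    preimage_farey_Ioo (by positivity) hle, hleft, hright,
    measureReal_union hdisj measurableSet_Ioo, reciprocalTail]

lemma fareyLaw_Ioo_div_add_one_le (n : ℕ) {t : ℝ} (ht : 0 < t) :
    (fareyLaw n).real (Ioo (t / (t + 1)) 1) ≤ fareyDensity n 1 * (log (t + 1) - log t) := by
  have hle : t / (t + 1) ≤ 1 := (div_le_one (by positivity)).2 (by linarith)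
  have h := fareyLaw_Icc_le_mul_log n (by positivity) hle le_rfl
  rwa [one_div_div, log_div (by positivity) ht.ne', ← fareyLaw_Ioo] at h

lemma le_fareyLaw_Ioo_div_add_one (n : ℕ) {t : ℝ} (ht : 1 ≤ t) :
    fareyDensity (n + 1) 1 * (log (t + 1) - log t) ≤ (fareyLaw n).real (Ioo (t / (t + 1)) 1) := by
  have ht₀ : 0 < t := by linarith
  have hle : t / (t + 1) ≤ 1 := (div_le_one (by positivity)).2 (by linarith)
  have hhalf : 1 / 2 ≤ t / (t + 1) := by
    rw [div_le_div_iff₀ two_pos (by positivity)]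
    linarith
  have h := mul_log_le_fareyLaw_Icc n (by positivity) hle le_rfl
  rw [one_div_div, log_div (by positivity) ht₀.ne', ← fareyLaw_Ioo] at h
  refine le_trans (mul_le_mul_of_nonneg_right ?_ ?_) h
  · rw [fareyDensity_succ_one]
    exact (inFareyCone_fareyDensity n).monotoneOn (by norm_num) ⟨by positivity, hle⟩ hhalf
  · exact sub_nonneg.2 (log_le_log ht₀ (by linarith))

lemma mul_log_sub_log_le_reciprocalTail (n : ℕ) {t : ℝ} (ht : 1 ≤ t) :
    fareyDensity n 1 * (log (t + n) - log t) ≤ reciprocalTail n t := by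
  induction n generalizing t with
  | zero => simpa using reciprocalTail_nonneg 0 t
  | succ n ih =>
    have hlog : 0 ≤ log (t + 1 + n) - log (t + 1) :=
      sub_nonneg.2 (log_le_log (by linarith) (by simp))
    have hanti := mul_le_mul_of_nonneg_right (antitone_fareyDensity_one n.le_succ) hlog
    have hstep := le_fareyLaw_Ioo_div_add_one n ht
    rw [reciprocalTail_succ n ht, Nat.cast_succ, add_comm (n : ℝ) 1, ← add_assoc]
    linarith [ih (show 1 ≤ t + 1 by linarith)]

lemma reciprocalTail_add_le (p k : ℕ) {t : ℝ} (ht : 1 ≤ t) :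
    reciprocalTail (p + k) t ≤
      reciprocalTail p (t + k) + fareyDensity p 1 * (log (t + k) - log t) := by
  induction k generalizing t with
  | zero => simp
  | succ k ih =>
    have hlog : 0 ≤ log (t + 1) - log t := sub_nonneg.2 (log_le_log (by linarith) (by simp))
    have hanti := mul_le_mul_of_nonneg_right
      (antitone_fareyDensity_one (Nat.le_add_right p k)) hlog
    have hstep := fareyLaw_Ioo_div_add_one_le (p + k) (show 0 < t by linarith)
    rw [← add_assoc, reciprocalTail_succ _ ht, Nat.cast_succ, add_comm (k : ℝ) 1, ← add_assoc]
    linarith [ih (show 1 ≤ t + 1 by linarith)]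

lemma log_add_sub_log_le {s t : ℝ} (hs : 0 ≤ s) (ht : 0 < t) : log (t + s) - log t ≤ s / t := by
  rw [← log_div (by positivity) ht.ne']
  calc log ((t + s) / t) ≤ (t + s) / t - 1 := log_le_sub_one_of_pos (by positivity)
    _ = s / t := by field_simp; ring

lemma reciprocalTail_le_sum (n : ℕ) {t : ℝ} (ht : 1 ≤ t) :
    reciprocalTail n t ≤ 1 / (t + n) + (∑ k ∈ Finset.range n, fareyDensity k 1) / t := by
  induction n generalizing t with
  | zero => simp [reciprocalTail_zero ht]
  | succ n ih =>
    have ht₀ : 0 < t := by linarith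
    have hsum : 0 ≤ ∑ k ∈ Finset.range n, fareyDensity k 1 :=
      Finset.sum_nonneg fun k _ ↦ fareyDensity_one_nonneg k
    calc reciprocalTail (n + 1) t
        = reciprocalTail n (t + 1) + (fareyLaw n).real (Ioo (t / (t + 1)) 1) :=
          reciprocalTail_succ n ht
      _ ≤ 1 / (t + 1 + n) + (∑ k ∈ Finset.range n, fareyDensity k 1) / (t + 1) +
          fareyDensity n 1 * (1 / t) :=
        add_le_add (ih (by linarith)) <| (fareyLaw_Ioo_div_add_one_le n ht₀).trans <|
          mul_le_mul_of_nonneg_left (log_add_sub_log_le zero_le_one ht₀) (fareyDensity_one_nonneg n)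
      _ ≤ 1 / (t + 1 + n) + (∑ k ∈ Finset.range n, fareyDensity k 1) / t +
          fareyDensity n 1 * (1 / t) := by gcongr; linarith
      _ = 1 / (t + (n + 1 : ℕ)) + (∑ k ∈ Finset.range (n + 1), fareyDensity k 1) / t := by
        rw [Finset.sum_range_succ]
        push_cast
        ring

/-! ### Asymptotics of the densities -/

lemma fareyDensity_one_le_one (n : ℕ) : fareyDensity n 1 ≤ 1 := antitone_fareyDensity_one n.zero_le

lemma fareyDensity_one_mul_log_le_one (n : ℕ) : fareyDensity n 1 * log (n + 1) ≤ 1 := by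
  have h := mul_log_sub_log_le_reciprocalTail n le_rfl
  rwa [reciprocalTail_one, log_one, sub_zero, add_comm] at h

lemma log_natCast_add_one_nonneg (n : ℕ) : 0 ≤ log ((n : ℝ) + 1) := by
  exact_mod_cast log_natCast_nonneg (n + 1)

lemma mul_log_add_one_sub_sum_log_le (N : ℕ) :
    N * log (N + 1) - ∑ k ∈ Finset.range N, log ((k : ℝ) + 1) ≤ N + 1 := by
  have hfact : ∑ k ∈ Finset.range N, log ((k : ℝ) + 1) = log (N.factorial : ℝ) := by
    rw [← log_prod fun k _ ↦ by positivity, ← Finset.prod_range_add_one_eq_factorial]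
    push_cast
    rfl
  rw [hfact, ← log_pow, ← log_div (by positivity) (by positivity),
    log_le_iff_le_exp (by positivity)]
  exact pow_div_factorial_le_exp _ (by positivity) N

lemma sum_fareyDensity_one_mul_log_le (N : ℕ) :
    (∑ k ∈ Finset.range N, fareyDensity k 1) * log (N + 1) ≤ 2 * (N + 1) := by
  have hterm : ∀ k ∈ Finset.range N,
      fareyDensity k 1 * log (N + 1) ≤ 1 + (log (N + 1) - log ((k : ℝ) + 1)) := by
    intro k hk
    have hkN : (k : ℝ) ≤ N := by exact_mod_cast (Finset.mem_range.1 hk).le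
    have hlog : 0 ≤ log ((N : ℝ) + 1) - log ((k : ℝ) + 1) :=
      sub_nonneg.2 (log_le_log (by positivity) (by linarith))
    have hexcess := mul_le_of_le_one_left hlog (fareyDensity_one_le_one k)
    linarith [fareyDensity_one_mul_log_le_one k]
  rw [Finset.sum_mul]
  refine (Finset.sum_le_sum hterm).trans ?_
  rw [Finset.sum_add_distrib, Finset.sum_sub_distrib]
  simp only [Finset.sum_const, Finset.card_range, nsmul_eq_mul, mul_one]
  linarith [mul_log_add_one_sub_sum_log_le N]

lemma log_sub_three_le_fareyDensity_one_mul (N : ℕ) :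
    log (N + 1) - 3 ≤ fareyDensity N 1 * log (N + 1) ^ 2 := by
  have hL := log_natCast_add_one_nonneg N
  have hLN : log ((N : ℝ) + 1) ≤ N + 1 := log_le_self (by positivity)
  have hmass := reciprocalTail_add_le N N (le_refl (1 : ℝ))
  have htail := reciprocalTail_le_sum N (show (1 : ℝ) ≤ 1 + N by simp)
  rw [reciprocalTail_one, log_one, sub_zero] at hmass
  have hfirst : 1 / ((1 : ℝ) + N + N) * log (N + 1) ≤ 1 := by
    rw [div_mul_eq_mul_div, one_mul, div_le_one (by positivity)]
    linarith [(N.cast_nonneg : (0 : ℝ) ≤ N)]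
  have hsecond : (∑ k ∈ Finset.range N, fareyDensity k 1) / (1 + N) * log (N + 1) ≤ 2 := by
    rw [div_mul_eq_mul_div, div_le_iff₀ (by positivity)]
    linarith [sum_fareyDensity_one_mul_log_le N]
  have hscaled := mul_le_mul_of_nonneg_right (hmass.trans (add_le_add_left htail _)) hL
  rw [add_comm (1 : ℝ) N] at hscaled hfirst hsecond
  linarith

-- The two branches at `1 / (j + 1)` are `1 / (j + 2)` and a point where the density is at most
-- its value at `1`; solving the transfer equation for the former bounds it from below.
lemma mul_fareyDensity_one_sub_le (n j : ℕ) :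
    (j + 1) * fareyDensity (n + j) 1 - j * fareyDensity n 1 ≤ fareyDensity n (1 / (j + 1)) := by
  induction j generalizing n with
  | zero => simp
  | succ j ih =>
    have hbranch : (j + 2) * fareyDensity (n + 1) (1 / (j + 1)) =
        (j + 1) * fareyDensity n (1 / (j + 2)) + fareyDensity n ((j + 1) / (j + 2)) := by
      have hleft_arg : 1 / ((j : ℝ) + 1) / (1 + 1 / (j + 1)) = 1 / (j + 2) := by field_simp; ring
      have hright_arg : 1 / (1 + 1 / ((j : ℝ) + 1)) = (j + 1) / (j + 2) := by field_simp; ring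
      rw [fareyDensity_succ, fareyTransfer, hleft_arg, hright_arg]
      field_simp
    have hright : fareyDensity n ((j + 1) / (j + 2)) ≤ fareyDensity n 1 :=
      fareyDensity_le_one_right n
        ⟨by positivity, (div_le_one (by positivity)).2 (by linarith)⟩
    have hanti : j * fareyDensity (n + 1) 1 ≤ j * fareyDensity n 1 :=
      mul_le_mul_of_nonneg_left (antitone_fareyDensity_one n.le_succ) j.cast_nonneg
    have hind := mul_le_mul_of_nonneg_left (ih (n + 1)) (show (0 : ℝ) ≤ j + 2 by positivity)
    rw [hbranch, add_right_comm n 1 j] at hind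
    rw [Nat.cast_succ, add_assoc (j : ℝ) 1 1, one_add_one_eq_two, ← add_assoc]
    refine le_of_mul_le_mul_left ?_ (show (0 : ℝ) < j + 1 by positivity)
    linarith [mul_le_mul_of_nonneg_left hanti (show (0 : ℝ) ≤ j + 2 by positivity)]

lemma log_sub_le_fareyDensity_one_add_mul (n j : ℕ) :
    log (n + 1) - (2 * j + 3) ≤ fareyDensity (n + j) 1 * log (n + 1) ^ 2 := by
  have ha := fareyDensity_one_nonneg (n + j)
  have hL := log_natCast_add_one_nonneg n
  have hlower := log_sub_three_le_fareyDensity_one_mul (n + j)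
  have hupper := fareyDensity_one_mul_log_le_one (n + j)
  have hshift : log ((n + j : ℕ) + 1) - log ((n : ℝ) + 1) ≤ j := by
    have h := log_add_sub_log_le j.cast_nonneg (show (0 : ℝ) < n + 1 by positivity)
    rw [Nat.cast_add, add_right_comm]
    exact h.trans (div_le_self j.cast_nonneg (by simp))
  have hmono : log ((n : ℝ) + 1) ≤ log ((n + j : ℕ) + 1) :=
    log_le_log (by positivity) (by simp)
  have hM := hL.trans hmono
  set a := fareyDensity (n + j) 1
  set L := log ((n : ℝ) + 1)
  set M := log ((n + j : ℕ) + (1 : ℝ))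
  have hsquares : a * M ^ 2 - a * L ^ 2 ≤ 2 * j :=
    calc a * M ^ 2 - a * L ^ 2 = (M - L) * (a * (M + L)) := by ring
      _ ≤ j * (a * (M + M)) := by gcongr
      _ = 2 * j * (a * M) := by ring
      _ ≤ 2 * j := mul_le_of_le_one_right (by positivity) hupper
  linarith

lemma fareyDensity_mul_log_le_one (n : ℕ) {x : ℝ} (hx : x ∈ Icc (0 : ℝ) 1) :
    fareyDensity n x * log (n + 1) ≤ 1 :=
  (mul_le_mul_of_nonneg_right (fareyDensity_le_one_right n hx)
    (log_natCast_add_one_nonneg n)).trans (fareyDensity_one_mul_log_le_one n)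

lemma log_sub_le_fareyDensity_mul (n j : ℕ) {x : ℝ} (hx : x ∈ Icc (1 / (j + 1) : ℝ) 1) :
    log (n + 1) - (j + 1) * (2 * j + 3) ≤ fareyDensity n x * log (n + 1) ^ 2 := by
  have hj : (0 : ℝ) ≤ 1 / (j + 1) := by positivity
  have hL := log_natCast_add_one_nonneg n
  have hmono : fareyDensity n (1 / (j + 1)) ≤ fareyDensity n x :=
    (inFareyCone_fareyDensity n).monotoneOn ⟨hj, hx.1.trans hx.2⟩ ⟨hj.trans hx.1, hx.2⟩ hx.1
  have hsmall := mul_le_mul_of_nonneg_right ((mul_fareyDensity_one_sub_le n j).trans hmono)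
    (sq_nonneg (log ((n : ℝ) + 1)))
  have hlower := mul_le_mul_of_nonneg_left (log_sub_le_fareyDensity_one_add_mul n j)
    (show (0 : ℝ) ≤ j + 1 by positivity)
  have hupper := mul_le_mul_of_nonneg_left (fareyDensity_one_mul_log_le_one n)
    (show 0 ≤ j * log ((n : ℝ) + 1) by positivity)
  linarith

lemma abs_fareyLaw_Icc_sub_le (n j : ℕ) {u v : ℝ} (hu : 1 / (j + 1) ≤ u) (huv : u ≤ v)
    (hv : v ≤ 1) (hn : n ≠ 0) :
    |(fareyLaw n).real (Icc u v) - log (v / u) / log (n + 1)| ≤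
      log (v / u) * ((j + 1) * (2 * j + 3)) / log (n + 1) ^ 2 := by
  have hu₀ : 0 < u := lt_of_lt_of_le (by positivity) hu
  have hlog : 0 ≤ log (v / u) := log_nonneg ((one_le_div hu₀).2 huv)
  have hL : 0 < log ((n : ℝ) + 1) := log_pos (by simpa [Nat.pos_iff_ne_zero] using hn)
  have hlower : (log (n + 1) - (j + 1) * (2 * j + 3)) / log (n + 1) ^ 2 ≤ fareyDensity n u :=
    (div_le_iff₀ (by positivity)).2 (log_sub_le_fareyDensity_mul n j ⟨hu, huv.trans hv⟩)
  have hupper : fareyDensity n v ≤ 1 / log (n + 1) :=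
    (le_div_iff₀ hL).2 (fareyDensity_mul_log_le_one n ⟨hu₀.le.trans huv, hv⟩)
  have hlawle := (fareyLaw_Icc_le_mul_log n hu₀ huv hv).trans
    (mul_le_mul_of_nonneg_right hupper hlog)
  have hlawge := (mul_le_mul_of_nonneg_right hlower hlog).trans
    (mul_log_le_fareyLaw_Icc n hu₀ huv hv)
  have herror : 0 ≤ log (v / u) * ((j + 1) * (2 * j + 3)) / log (n + 1) ^ 2 := by positivity
  have hexpand : (log (n + 1) - (j + 1) * (2 * j + 3)) / log (n + 1) ^ 2 * log (v / u) =
      log (v / u) / log (n + 1) - log (v / u) * ((j + 1) * (2 * j + 3)) / log (n + 1) ^ 2 := by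
    field_simp
  rw [hexpand] at hlawge
  rw [one_div_mul_eq_div] at hlawle
  exact abs_le.2 ⟨by linarith, by linarith⟩

lemma preimageMeasure_add_one (α β : ℝ) (n : ℕ) :
    preimageMeasure α β (n + 1) = (fareyLaw n).real (Icc α β) := by
  rw [preimageMeasure, Measure.real, fareyLaw_apply n measurableSet_Icc, Nat.add_sub_cancel]

lemma tendsto_mul_of_eventually_abs_sub_div_le {ι : Type*} {l : Filter ι} {u L : ι → ℝ} {c C : ℝ}
    (hL : Tendsto L l atTop) (hu : ∀ᶠ i in l, |u i - c / L i| ≤ C / L i ^ 2) :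
    Tendsto (fun i ↦ u i * L i) l (𝓝 c) := by
  refine tendsto_iff_norm_sub_tendsto_zero.2 <| squeeze_zero' (Eventually.of_forall fun _ ↦
    norm_nonneg _) ?_ (hL.const_div_atTop C)
  filter_upwards [hu, hL.eventually_gt_atTop 0] with i hi hpos
  calc ‖u i * L i - c‖ = |u i - c / L i| * L i := by
        rw [norm_eq_abs, ← abs_of_pos hpos, ← abs_mul, abs_of_pos hpos, sub_mul,
          div_mul_cancel₀ c hpos.ne']
    _ ≤ C / L i ^ 2 * L i := by gcongr
    _ = C / L i := by field_simp

end

theorem effective_farey_asymptotics (α β : ℝ) (hα : 0 < α) (hαβ : α < β) (hβ : β ≤ 1) :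
    (∃ C : ℝ, ∃ n₀ : ℕ, ∀ n : ℕ, n₀ ≤ n →
        |preimageMeasure α β n - Real.log (β / α) / Real.log n| ≤
          C / (Real.log n) ^ 2) ∧
    Tendsto (fun n : ℕ => preimageMeasure α β n * Real.log n) atTop
      (nhds (Real.log (β / α))) := by
  obtain ⟨j, hj⟩ := exists_nat_one_div_lt hα
  have hrate : ∀ n : ℕ, 2 ≤ n → |preimageMeasure α β n - Real.log (β / α) / Real.log n| ≤
      Real.log (β / α) * ((j + 1) * (2 * j + 3)) / Real.log n ^ 2 := by
    intro n hn
    obtain ⟨m, rfl⟩ : ∃ m, n = m + 1 := ⟨n - 1, by omega⟩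
    rw [preimageMeasure_add_one, Nat.cast_succ]
    exact abs_fareyLaw_Icc_sub_le m j hj.le hαβ.le hβ (by omega)
  have hlog : Tendsto (fun n : ℕ ↦ Real.log n) atTop atTop :=
    tendsto_log_atTop.comp tendsto_natCast_atTop_atTop
  exact ⟨⟨_, 2, hrate⟩,
    tendsto_mul_of_eventually_abs_sub_div_le hlog ((eventually_ge_atTop 2).mono hrate)⟩
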